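/- Let M ∈ ℂ^{p×p} be invertible and let A, B ∈ ℂ^{n×n×p} be *_M-pseudo-positive-definite. Then the Riccati tensor equation X *_M A⁻¹ *_M X = B has a unique *_M-pseudo-positive-definite solution X, and this solution equals the tensor geometric mean A #_M B = A^{1/2} *_M (A^{−1/2} *_M B *_M A^{−1/2})^{1/2} *_M A^{1/2}. -/

import Mathlib

open Matrix
open scoped ComplexOrder

attribute [local instance] Classical.propDecidable

noncomputable section

/-- Mode-3 product of a third-order complex tensor (stack of `p` frontal slices)
with a matrix `M ∈ ℂ^{q×p}`: `(A ×₃ M)ₖ = Σ_l M k l • A l`. -/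
def mode3 {m n p q : ℕ} (M : Matrix (Fin q) (Fin p) ℂ)
    (A : Fin p → Matrix (Fin m) (Fin n) ℂ) : Fin q → Matrix (Fin m) (Fin n) ℂ :=
  fun k => ∑ l, M k l • A l

/-- Face-wise product of two third-order tensors. -/
def facewise {m n s p : ℕ} (A : Fin p → Matrix (Fin m) (Fin n) ℂ)
    (B : Fin p → Matrix (Fin n) (Fin s) ℂ) : Fin p → Matrix (Fin m) (Fin s) ℂ :=
  fun i => A i * B i

/-- Tensor-tensor multiplication with an invertible `M ∈ ℂ^{p×p}`:
`A *_M B = ((A ×₃ M) △ (B ×₃ M)) ×₃ M⁻¹`. -/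
def tmul3 {m n s p : ℕ} (M : Matrix (Fin p) (Fin p) ℂ)
    (A : Fin p → Matrix (Fin m) (Fin n) ℂ) (B : Fin p → Matrix (Fin n) (Fin s) ℂ) :
    Fin p → Matrix (Fin m) (Fin s) ℂ :=
  mode3 M⁻¹ (facewise (mode3 M A) (mode3 M B))

/-- `A ∈ ℂ^{n×n×p}` is `*_M`-pseudo-positive-definite if every frontal slice of
`A ×₃ M` is (Hermitian) positive-definite. -/
def PseudoPD {n p : ℕ} (M : Matrix (Fin p) (Fin p) ℂ)
    (A : Fin p → Matrix (Fin n) (Fin n) ℂ) : Prop :=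
  ∀ i, (mode3 M A i).PosDef

/-- The `*_M`-identity tensor: all frontal slices of `I ×₃ M` equal `I_n`. -/
def tId {p : ℕ} (n : ℕ) (M : Matrix (Fin p) (Fin p) ℂ) :
    Fin p → Matrix (Fin n) (Fin n) ℂ :=
  mode3 M⁻¹ (fun _ => 1)

/-- The `*_M`-inverse of a tensor (the unique two-sided inverse when it exists). -/
def tinv {n p : ℕ} (M : Matrix (Fin p) (Fin p) ℂ)
    (A : Fin p → Matrix (Fin n) (Fin n) ℂ) : Fin p → Matrix (Fin n) (Fin n) ℂ :=
  if h : ∃ X, tmul3 M A X = tId n M ∧ tmul3 M X A = tId n M then h.choose else 0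

/-- The `*_M`-pseudo-positive-definite square root of a tensor (the unique
pseudo-positive-definite `B` with `B *_M B = A`, when it uniquely exists). -/
def tsqrt {n p : ℕ} (M : Matrix (Fin p) (Fin p) ℂ)
    (A : Fin p → Matrix (Fin n) (Fin n) ℂ) : Fin p → Matrix (Fin n) (Fin n) ℂ :=
  if h : ∃! B, PseudoPD M B ∧ tmul3 M B B = A then h.choose else 0

/-- The tensor geometric mean
`A #_M B = A^{1/2} *_M (A^{−1/2} *_M B *_M A^{−1/2})^{1/2} *_M A^{1/2}`,
where `A^{−1/2} = (A^{1/2})⁻¹`. -/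
def geomean {n p : ℕ} (M : Matrix (Fin p) (Fin p) ℂ)
    (A B : Fin p → Matrix (Fin n) (Fin n) ℂ) : Fin p → Matrix (Fin n) (Fin n) ℂ :=
  tmul3 M (tmul3 M (tsqrt M A)
    (tsqrt M (tmul3 M (tmul3 M (tinv M (tsqrt M A)) B) (tinv M (tsqrt M A)))))
    (tsqrt M A)

end

/-!
Under the transform `A ↦ A ×₃ M` the product `*_M` becomes slicewise multiplication, so inverse,
square root and geometric mean are computed slice by slice, and the equation decouples into the
Riccati equations `x * a⁻¹ * x = b` for positive definite matrices. There the substitution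
`x = a^{1/2} y a^{1/2}` turns the equation into `y ^ 2 = a^{-1/2} b a^{-1/2}`, whose only
nonnegative solution is the square root of the right-hand side.
-/

section CFC

open scoped Ring

variable {R : Type*} [PartialOrder R] [Ring R] [StarRing R] [TopologicalSpace R]
  [StarOrderedRing R] [Algebra ℝ R] [ContinuousFunctionalCalculus ℝ R IsSelfAdjoint]
  [NonnegSpectrumClass ℝ R]

/-- The geometric mean `a # b = a^{1/2} (a^{-1/2} b a^{-1/2})^{1/2} a^{1/2}` of positive elements
of a star-ordered algebra. It is meaningful for strictly positive `a`: otherwise `CFC.sqrt a` is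
not invertible, and its `Ring.inverse` is `0`. -/
noncomputable def cfcGeomMean (a b : R) : R :=
  CFC.sqrt a * CFC.sqrt ((CFC.sqrt a)⁻¹ʳ * b * (CFC.sqrt a)⁻¹ʳ) * CFC.sqrt a

variable [IsSemitopologicalRing R] [T2Space R] {a b x : R}

theorem mul_ringInverse_mul_eq_iff_eq_cfcGeomMean (ha : IsStrictlyPositive a) (hb : 0 ≤ b)
    (hx : 0 ≤ x) : x * a⁻¹ʳ * x = b ↔ x = cfcGeomMean a b := by
  obtain ⟨s, hs⟩ : IsUnit (CFC.sqrt a) := ha.isUnit_cfcSqrt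
  have hs_inv : IsSelfAdjoint (↑s⁻¹ : R) := by
    rw [← Ring.inverse_unit, hs]
    exact ha.sqrt.ringInverse.isSelfAdjoint
  have ha_inv : a⁻¹ʳ = ↑s⁻¹ * ↑s⁻¹ := by
    rw [← CFC.sqrt_mul_sqrt_self a ha.nonneg, ← hs, Ring.inverse_mul (.inl s.isUnit),
      Ring.inverse_unit]
  rw [cfcGeomMean, ← hs, Ring.inverse_unit]
  calc x * a⁻¹ʳ * x = b
    _ ↔ ↑s⁻¹ * (x * a⁻¹ʳ * x) * ↑s⁻¹ = ↑s⁻¹ * b * (↑s⁻¹ : R) := by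
      rw [Units.mul_left_inj, Units.mul_right_inj]
    _ ↔ (↑s⁻¹ * x * ↑s⁻¹) * (↑s⁻¹ * x * ↑s⁻¹) = ↑s⁻¹ * b * (↑s⁻¹ : R) := by
      simp only [ha_inv, mul_assoc]
    _ ↔ ↑s⁻¹ * x * ↑s⁻¹ = CFC.sqrt (↑s⁻¹ * b * (↑s⁻¹ : R)) := by
      rw [eq_comm (b := CFC.sqrt _), CFC.sqrt_eq_iff _ _ (hs_inv.conjugate_nonneg hb)
        (hs_inv.conjugate_nonneg hx)]
    _ ↔ x = s * CFC.sqrt (↑s⁻¹ * b * (↑s⁻¹ : R)) * s := by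
      rw [Units.mul_inv_eq_iff_eq_mul, Units.inv_mul_eq_iff_eq_mul, ← mul_assoc]

theorem isStrictlyPositive_cfcGeomMean (ha : IsStrictlyPositive a) (hb : IsStrictlyPositive b) :
    IsStrictlyPositive (cfcGeomMean a b) := by
  have hs : IsStrictlyPositive (CFC.sqrt a) := ha.sqrt
  have hc : IsStrictlyPositive ((CFC.sqrt a)⁻¹ʳ * b * (CFC.sqrt a)⁻¹ʳ) :=
    hb.conjugate_of_isUnit_of_isSelfAdjoint _ _ hs.isUnit.ringInverse hs.ringInverse.isSelfAdjoint
  exact hc.sqrt.conjugate_of_isUnit_of_isSelfAdjoint _ _ hs.isUnit hs.isSelfAdjoint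

theorem isStrictlyPositive_and_mul_ringInverse_mul_eq_iff_eq_cfcGeomMean
    (ha : IsStrictlyPositive a) (hb : IsStrictlyPositive b) :
    IsStrictlyPositive x ∧ x * a⁻¹ʳ * x = b ↔ x = cfcGeomMean a b := by
  constructor
  · rintro ⟨hx, hxb⟩
    exact (mul_ringInverse_mul_eq_iff_eq_cfcGeomMean ha hb.nonneg hx.nonneg).1 hxb
  · rintro rfl
    have hx := isStrictlyPositive_cfcGeomMean ha hb
    exact ⟨hx, (mul_ringInverse_mul_eq_iff_eq_cfcGeomMean ha hb.nonneg hx.nonneg).2 rfl⟩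

end CFC

section PosDef

open scoped MatrixOrder

variable {ι 𝕜 : Type*} [Fintype ι] [RCLike 𝕜] {A B S X : Matrix ι ι 𝕜}

theorem posDef_and_mul_self_eq_iff_eq_cfcSqrt (hA : A.PosDef) :
    S.PosDef ∧ S * S = A ↔ S = CFC.sqrt A := by
  constructor
  · rintro ⟨hS, hSA⟩
    exact (CFC.sqrt_unique hSA hS.posSemidef.nonneg).symm
  · rintro rfl
    exact ⟨hA.isStrictlyPositive.sqrt.posDef, CFC.sqrt_mul_sqrt_self A hA.posSemidef.nonneg⟩

variable [DecidableEq ι]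

theorem posDef_and_mul_inv_mul_eq_iff_eq_cfcGeomMean (hA : A.PosDef) (hB : B.PosDef) :
    X.PosDef ∧ X * A⁻¹ * X = B ↔ X = cfcGeomMean A B := by
  rw [nonsing_inv_eq_ringInverse, ← isStrictlyPositive_iff_posDef]
  exact isStrictlyPositive_and_mul_ringInverse_mul_eq_iff_eq_cfcGeomMean
    hA.isStrictlyPositive hB.isStrictlyPositive

end PosDef

section Mode3

variable {m n p q r : ℕ}

theorem mode3_mode3 (N : Matrix (Fin r) (Fin q) ℂ) (M : Matrix (Fin q) (Fin p) ℂ)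
    (A : Fin p → Matrix (Fin m) (Fin n) ℂ) : mode3 N (mode3 M A) = mode3 (N * M) A := by
  funext k
  simp only [mode3, Matrix.mul_apply, Finset.smul_sum, Finset.sum_smul, smul_smul]
  exact Finset.sum_comm

theorem mode3_one (A : Fin p → Matrix (Fin m) (Fin n) ℂ) : mode3 1 A = A := by
  funext k
  simp [mode3, Matrix.one_apply, ite_smul]

end Mode3

section Tmul3

variable {m n s p : ℕ} {M : Matrix (Fin p) (Fin p) ℂ}

theorem mode3_mode3_inv (hM : IsUnit M.det) (A : Fin p → Matrix (Fin m) (Fin n) ℂ) :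
    mode3 M (mode3 M⁻¹ A) = A := by
  rw [mode3_mode3, mul_nonsing_inv M hM, mode3_one]

theorem mode3_inv_mode3 (hM : IsUnit M.det) (A : Fin p → Matrix (Fin m) (Fin n) ℂ) :
    mode3 M⁻¹ (mode3 M A) = A := by
  rw [mode3_mode3, nonsing_inv_mul M hM, mode3_one]

theorem eq_iff_forall_mode3_eq (hM : IsUnit M.det) {A B : Fin p → Matrix (Fin m) (Fin n) ℂ} :
    A = B ↔ ∀ i, mode3 M A i = mode3 M B i := by
  rw [← funext_iff, (Function.LeftInverse.injective (mode3_inv_mode3 hM)).eq_iff]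

theorem mode3_tmul3 (hM : IsUnit M.det) (A : Fin p → Matrix (Fin m) (Fin n) ℂ)
    (B : Fin p → Matrix (Fin n) (Fin s) ℂ) (i : Fin p) :
    mode3 M (tmul3 M A B) i = mode3 M A i * mode3 M B i := by
  rw [tmul3, mode3_mode3_inv hM, facewise]

theorem mode3_tId (hM : IsUnit M.det) (i : Fin p) : mode3 M (tId n M) i = 1 := by
  rw [tId, mode3_mode3_inv hM]

end Tmul3

section Geomean

open scoped MatrixOrder

variable {n p : ℕ} {M : Matrix (Fin p) (Fin p) ℂ} {A B : Fin p → Matrix (Fin n) (Fin n) ℂ}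

theorem mode3_tinv (hM : IsUnit M.det) (hA : ∀ i, IsUnit (mode3 M A i)) (i : Fin p) :
    mode3 M (tinv M A) i = (mode3 M A i)⁻¹ := by
  have hdet (j : Fin p) : IsUnit (mode3 M A j).det := (isUnit_iff_isUnit_det _).1 (hA j)
  have h : ∃ X, tmul3 M A X = tId n M ∧ tmul3 M X A = tId n M := by
    refine ⟨mode3 M⁻¹ fun j => (mode3 M A j)⁻¹, ?_⟩
    simp only [eq_iff_forall_mode3_eq hM, mode3_tmul3 hM, mode3_tId hM, mode3_mode3_inv hM]
    exact ⟨fun j => mul_nonsing_inv _ (hdet j), fun j => nonsing_inv_mul _ (hdet j)⟩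
  rw [tinv, dif_pos h]
  refine (inv_eq_right_inv ?_).symm
  rw [← mode3_tmul3 hM, h.choose_spec.1, mode3_tId hM]

theorem pseudoPD_and_tmul3_self_eq_iff (hM : IsUnit M.det) (hA : PseudoPD M A) :
    PseudoPD M B ∧ tmul3 M B B = A ↔ ∀ i, mode3 M B i = CFC.sqrt (mode3 M A i) := by
  simp only [PseudoPD, eq_iff_forall_mode3_eq hM, mode3_tmul3 hM, ← forall_and]
  exact forall_congr' fun i => posDef_and_mul_self_eq_iff_eq_cfcSqrt (hA i)

theorem mode3_tsqrt (hM : IsUnit M.det) (hA : PseudoPD M A) (i : Fin p) :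
    mode3 M (tsqrt M A) i = CFC.sqrt (mode3 M A i) := by
  have h : ∃! B, PseudoPD M B ∧ tmul3 M B B = A := by
    refine ⟨mode3 M⁻¹ fun j => CFC.sqrt (mode3 M A j), ?_, fun B hB => ?_⟩
    · simp only [pseudoPD_and_tmul3_self_eq_iff hM hA, mode3_mode3_inv hM, implies_true]
    · rw [eq_iff_forall_mode3_eq hM, mode3_mode3_inv hM]
      exact (pseudoPD_and_tmul3_self_eq_iff hM hA).1 hB
  rw [tsqrt, dif_pos h]
  exact (pseudoPD_and_tmul3_self_eq_iff hM hA).1 h.choose_spec.1 i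

theorem mode3_geomean (hM : IsUnit M.det) (hA : PseudoPD M A) (hB : PseudoPD M B) (i : Fin p) :
    mode3 M (geomean M A B) i = cfcGeomMean (mode3 M A i) (mode3 M B i) := by
  have hS (j : Fin p) : IsStrictlyPositive (mode3 M (tsqrt M A) j) := by
    rw [mode3_tsqrt hM hA]
    exact (hA j).isStrictlyPositive.sqrt
  have hS_inv := mode3_tinv hM fun j => (hS j).isUnit
  have hC : PseudoPD M (tmul3 M (tmul3 M (tinv M (tsqrt M A)) B) (tinv M (tsqrt M A))) := by
    intro j
    rw [mode3_tmul3 hM, mode3_tmul3 hM, hS_inv, nonsing_inv_eq_ringInverse,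
      ← isStrictlyPositive_iff_posDef]
    exact (hB j).isStrictlyPositive.conjugate_of_isUnit_of_isSelfAdjoint _ _
      (hS j).isUnit.ringInverse (hS j).ringInverse.isSelfAdjoint
  simp only [geomean, cfcGeomMean, mode3_tmul3 hM, mode3_tsqrt hM hC, hS_inv, mode3_tsqrt hM hA,
    nonsing_inv_eq_ringInverse]

end Geomean

/-- for invertible `M ∈ ℂ^{p×p}` and `*_M`-pseudo-positive-definite
`A, B ∈ ℂ^{n×n×p}`, the Riccati tensor equation `X *_M A⁻¹ *_M X = B` has a unique
`*_M`-pseudo-positive-definite solution, namely the tensor geometric mean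
`A #_M B = A^{1/2} *_M (A^{−1/2} *_M B *_M A^{−1/2})^{1/2} *_M A^{1/2}`. -/
theorem riccati_unique_solution_geomean {n p : ℕ} (M : Matrix (Fin p) (Fin p) ℂ)
    (hM : IsUnit M.det) (A B : Fin p → Matrix (Fin n) (Fin n) ℂ)
    (hA : PseudoPD M A) (hB : PseudoPD M B) :
    ∀ X : Fin p → Matrix (Fin n) (Fin n) ℂ,
      (PseudoPD M X ∧ tmul3 M (tmul3 M X (tinv M A)) X = B) ↔ X = geomean M A B := by
  intro X
  simp only [PseudoPD, eq_iff_forall_mode3_eq hM, mode3_tmul3 hM, mode3_geomean hM hA hB,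
    mode3_tinv hM fun i => (hA i).isUnit, ← forall_and]
  exact forall_congr' fun i => posDef_and_mul_inv_mul_eq_iff_eq_cfcGeomMean (hA i) (hB i)
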